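/- arXiv:1902.06404 — 2 statements merged into one kernel-verified Lean document; each statement's English description precedes it below -/
import Mathlib

section
/- In the r-state i.i.d. model, if m(n) = ⌈c·n^{2/(r−1)+α}⌉ and l(n) = ⌈c'·n^{2/(r−1)+α}⌉ for some constants c > 0, c' > 0 and α > 0, then user 1 has no privacy at every time k ∈ {1, …, m}: the infimum, over all estimators X̃_1(k) that are measurable functions of (W, Y), of the error probability P(X̃_1(k) ≠ X_1(k)) tends to 0 as n → ∞. -/
open MeasureTheory ProbabilityTheory Filter
open scoped ENNReal NNReal

/-- Discrete measure on `Fin r` assigning mass `q i` to the point `i`. -/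
noncomputable def catMeasure (r : ℕ) (q : Fin r → ℝ) : Measure (Fin r) :=
  ∑ i : Fin r, ENNReal.ofReal (q i) • Measure.dirac i

/-- Extend a parameter vector `(p 1, …, p (r-1))` (probabilities of the values `1, …, r-1`)
to a full probability vector on `{0, 1, …, r-1}`, value `0` receiving the remaining mass. -/
noncomputable def fullProb (r : ℕ) (p : Fin (r - 1) → ℝ) : Fin r → ℝ := fun i =>
  if h : (i : ℕ) = 0 then 1 - ∑ j, p j
  else p ⟨(i : ℕ) - 1, by have := i.isLt; omega⟩

/-- The open region `{x ∈ (0,1)^d : xᵢ > 0, x₁ + ⋯ + x_d < 1}` of admissible parameters. -/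
def simplexRegion (d : ℕ) : Set (Fin d → ℝ) :=
  {x | (∀ i, 0 < x i) ∧ ∑ i, x i < 1}

/-- Joint law of (parameters, actual traces, training traces) in the `r`-state i.i.d. model:
the parameter vectors `p u` are i.i.d. with law `μP`, and conditionally on the parameters the
`n` actual traces (of length `m`) and training traces (of length `l`) consist of i.i.d.
samples from `{0, …, r-1}` where value `i ≥ 1` has probability `p u i` and value `0` the
remaining probability; all traces are mutually independent. -/
noncomputable def rStateLaw (n m l r : ℕ) (μP : Measure (Fin (r - 1) → ℝ)) :
    Measure ((Fin n → Fin (r - 1) → ℝ) × (Fin n → Fin m → Fin r) × (Fin n → Fin l → Fin r)) :=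
  (Measure.pi fun _ : Fin n => μP).bind fun p =>
    (Measure.dirac p).prod
      ((Measure.pi fun u : Fin n =>
          Measure.pi fun _ : Fin m => catMeasure r (fullProb r (p u))).prod
        (Measure.pi fun u : Fin n =>
          Measure.pi fun _ : Fin l => catMeasure r (fullProb r (p u))))

/-!
By Hoeffding's inequality, all empirical distributions of the actual and of the training traces are
within `ε` of the distributions of their users, except with probability `O(n e^(-2 m ε²))`. Since
the density of the parameters is bounded, the probability that some other user lies within `4 ε` of
user 1 is `O(n ε^(r-1))`. Outside these events the anonymized trace whose empirical distribution is
closest to that of `W₁` is the trace of user 1, so the adversary can simply read off `X₁(k)`. For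
`ε = n^(-1/(r-1) - α/4)` both failure probabilities vanish, as `m ε²` grows like `n^(α/2)`.
-/

open scoped BigOperators Topology

section Concentration

variable {Ω ι S : Type*} [MeasurableSpace Ω] [MeasurableSpace S] [Fintype ι]

lemma measureReal_abs_sum_ge_le_of_iIndepFun {P : Measure Ω} {X : ι → Ω → ℝ}
    (hX : iIndepFun X P) {v : ι → ℝ≥0} (hsub : ∀ i, HasSubgaussianMGF (X i) (v i) P)
    {ε : ℝ} (hε : 0 ≤ ε) :
    P.real {ω | ε ≤ |∑ i, X i ω|} ≤ 2 * Real.exp (-ε ^ 2 / (2 * ∑ i, v i)) := by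
  have := hX.isProbabilityMeasure
  have upper := HasSubgaussianMGF.measure_sum_ge_le_of_iIndepFun hX (s := Finset.univ)
    (fun i _ => hsub i) hε
  have lower := HasSubgaussianMGF.measure_sum_ge_le_of_iIndepFun
    (hX.comp (fun _ => Neg.neg) fun _ => measurable_neg) (s := Finset.univ)
    (fun i _ => (hsub i).neg) hε
  have hunion : {ω | ε ≤ |∑ i, X i ω|} ⊆
      {ω | ε ≤ ∑ i, X i ω} ∪ {ω | ε ≤ ∑ i, (Neg.neg ∘ X i) ω} := fun ω hω => by
    simpa [le_abs] using hω
  calc P.real {ω | ε ≤ |∑ i, X i ω|}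
      ≤ P.real {ω | ε ≤ ∑ i, X i ω} + P.real {ω | ε ≤ ∑ i, (Neg.neg ∘ X i) ω} :=
        (measureReal_mono hunion).trans (measureReal_union_le _ _)
    _ ≤ 2 * Real.exp (-ε ^ 2 / (2 * ∑ i, v i)) := by
        rw [two_mul (Real.exp _)]
        exact_mod_cast add_le_add upper lower

lemma measureReal_pi_abs_expect_sub_integral_ge_le (ν : Measure S) [IsProbabilityMeasure ν]
    {h : S → ℝ} (hh : Measurable h) {a b : ℝ} (hab : a < b) (hmem : ∀ᵐ y ∂ν, h y ∈ Set.Icc a b)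
    {ε : ℝ} (hε : 0 ≤ ε) :
    (Measure.pi fun _ : ι => ν).real {x | ε ≤ |𝔼 t, h (x t) - ∫ y, h y ∂ν|} ≤
      2 * Real.exp (-2 * Fintype.card ι * ε ^ 2 / (b - a) ^ 2) := by
  have hmeas : Measurable fun y => h y - ∫ y, h y ∂ν := hh.sub_const _
  have hindep : iIndepFun (fun (t : ι) (x : ι → S) => h (x t) - ∫ y, h y ∂ν)
      (Measure.pi fun _ : ι => ν) :=
    iIndepFun_pi (X := fun _ y => h y - ∫ y, h y ∂ν) fun _ => hmeas.aemeasurable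
  have hsub (t : ι) : HasSubgaussianMGF (fun x : ι → S => h (x t) - ∫ y, h y ∂ν)
      ((‖b - a‖₊ / 2) ^ 2) (Measure.pi fun _ : ι => ν) := by
    refine .of_map (X := fun y => h y - ∫ y, h y ∂ν) (measurable_pi_apply t).aemeasurable ?_
    rw [(measurePreserving_eval (fun _ : ι => ν) t).map_eq]
    exact hasSubgaussianMGF_of_mem_Icc hh.aemeasurable hmem
  have hsum (x : ι → S) : ∑ t, (h (x t) - ∫ y, h y ∂ν) =
      Fintype.card ι * (𝔼 t, h (x t) - ∫ y, h y ∂ν) := by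
    simp [mul_sub]
  calc (Measure.pi fun _ : ι => ν).real {x | ε ≤ |𝔼 t, h (x t) - ∫ y, h y ∂ν|}
      ≤ (Measure.pi fun _ : ι => ν).real
          {x | Fintype.card ι * ε ≤ |∑ t, (h (x t) - ∫ y, h y ∂ν)|} := by
        refine measureReal_mono fun x (hx : ε ≤ _) => ?_
        simpa [hsum, abs_mul] using mul_le_mul_of_nonneg_left hx (Nat.cast_nonneg _)
    _ ≤ _ := measureReal_abs_sum_ge_le_of_iIndepFun hindep hsub (by positivity)
    _ = 2 * Real.exp (-2 * Fintype.card ι * ε ^ 2 / (b - a) ^ 2) := by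
        have : b - a ≠ 0 := (sub_pos.2 hab).ne'
        simp only [Finset.sum_const, Finset.card_univ, nsmul_eq_mul, NNReal.coe_mul,
          NNReal.coe_natCast, NNReal.coe_pow, NNReal.coe_div, coe_nnnorm, Real.norm_eq_abs,
          NNReal.coe_ofNat, div_pow, sq_abs]
        field_simp

end Concentration

section EmpiricalFrequency

variable {ι S U : Type*} [Fintype ι]

/-- The empirical distribution of a trace `x`: the proportion of times at which it takes the
value `a`. -/
noncomputable def empFreq (x : ι → S) (a : S) : ℝ :=
  𝔼 t, ({a} : Set S).indicator 1 (x t)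

/-- The event that the trace of some user has an empirical distribution at sup-distance at least
`ε` from that user's distribution `q u`. -/
def atypicalSet (q : U → S → ℝ) [Fintype S] (ε : ℝ) : Set (U → ι → S) :=
  {x | ∃ u, ε ≤ dist (empFreq (x u)) (q u)}

variable [MeasurableSpace S] [MeasurableSingletonClass S]

@[fun_prop]
lemma measurable_empFreq : Measurable (empFreq : (ι → S) → S → ℝ) := by
  refine measurable_pi_lambda _ fun a => ?_
  simp only [empFreq, Fintype.expect_eq_sum_div_card]
  have : Measurable (({a} : Set S).indicator (1 : S → ℝ)) :=
    measurable_one.indicator (measurableSet_singleton a)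
  fun_prop

lemma measureReal_abs_empFreq_sub_ge_le (ν : Measure S) [IsProbabilityMeasure ν] (a : S)
    {ε : ℝ} (hε : 0 ≤ ε) :
    (Measure.pi fun _ : ι => ν).real {x | ε ≤ |empFreq x a - ν.real {a}|} ≤
      2 * Real.exp (-2 * Fintype.card ι * ε ^ 2) := by
  have hIcc : ∀ y, ({a} : Set S).indicator (1 : S → ℝ) y ∈ Set.Icc 0 1 := fun y =>
    ⟨Set.indicator_nonneg (by simp) y, Set.indicator_le_self' (by simp) y⟩
  simpa [empFreq, integral_indicator_one] using
    measureReal_pi_abs_expect_sub_integral_ge_le (ι := ι) ν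
      (measurable_one.indicator (measurableSet_singleton a)) zero_lt_one
      (Eventually.of_forall hIcc) hε

variable [Fintype S]

lemma measureReal_dist_empFreq_ge_le (ν : Measure S) [IsProbabilityMeasure ν]
    {ε : ℝ} (hε : 0 < ε) :
    (Measure.pi fun _ : ι => ν).real {x | ε ≤ dist (empFreq x) fun a => ν.real {a}} ≤
      Fintype.card S * (2 * Real.exp (-2 * Fintype.card ι * ε ^ 2)) := by
  have hunion : {x : ι → S | ε ≤ dist (empFreq x) fun a => ν.real {a}} =
      ⋃ a, {x | ε ≤ |empFreq x a - ν.real {a}|} := by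
    ext x
    simp [← not_lt, dist_pi_lt_iff hε, Real.dist_eq]
  calc (Measure.pi fun _ : ι => ν).real {x | ε ≤ dist (empFreq x) fun a => ν.real {a}}
      ≤ ∑ a, (Measure.pi fun _ : ι => ν).real {x | ε ≤ |empFreq x a - ν.real {a}|} :=
        hunion ▸ measureReal_iUnion_fintype_le _
    _ ≤ ∑ _a : S, 2 * Real.exp (-2 * Fintype.card ι * ε ^ 2) :=
        Finset.sum_le_sum fun a _ => measureReal_abs_empFreq_sub_ge_le ν a hε.le
    _ = _ := by simp

lemma measureReal_atypicalSet_le [Fintype U] (ν : U → Measure S)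
    [∀ u, IsProbabilityMeasure (ν u)] {ε : ℝ} (hε : 0 < ε) :
    (Measure.pi fun u => Measure.pi fun _ : ι => ν u).real
        (atypicalSet (fun u a => (ν u).real {a}) ε) ≤
      Fintype.card U * (Fintype.card S * (2 * Real.exp (-2 * Fintype.card ι * ε ^ 2))) := by
  have hrow (u : U) : (Measure.pi fun u => Measure.pi fun _ : ι => ν u).real
      {x | ε ≤ dist (empFreq (x u)) fun a => (ν u).real {a}} ≤
        Fintype.card S * (2 * Real.exp (-2 * Fintype.card ι * ε ^ 2)) := by
    have hmeas : MeasurableSet {x : ι → S | ε ≤ dist (empFreq x) fun a => (ν u).real {a}} :=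
      measurableSet_le measurable_const (by fun_prop)
    exact ((measurePreserving_eval (fun u => Measure.pi fun _ : ι => ν u) u).measureReal_preimage
      hmeas.nullMeasurableSet).trans_le (measureReal_dist_empFreq_ge_le (ν u) hε)
  calc (Measure.pi fun u => Measure.pi fun _ : ι => ν u).real
        (atypicalSet (fun u a => (ν u).real {a}) ε)
      ≤ ∑ u, (Measure.pi fun u => Measure.pi fun _ : ι => ν u).real
          {x | ε ≤ dist (empFreq (x u)) fun a => (ν u).real {a}} := by
        rw [atypicalSet, Set.ofPred_exists]; exact measureReal_iUnion_fintype_le _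
    _ ≤ ∑ _u : U, Fintype.card S * (2 * Real.exp (-2 * Fintype.card ι * ε ^ 2)) :=
        Finset.sum_le_sum fun u _ => hrow u
    _ = _ := by simp

end EmpiricalFrequency

section Crowding

variable {U E : Type*} [PseudoMetricSpace E]

/-- The event that some other point of the configuration `p` lies within distance `δ` of the point
of user `u₀`. -/
def crowdedSet (u₀ : U) (δ : ℝ) : Set (U → E) :=
  {p | ∃ u ≠ u₀, dist (p u) (p u₀) < δ}

variable [MeasurableSpace E] [OpensMeasurableSpace E] [SecondCountableTopology E]

lemma measurableSet_crowdedSet [Countable U] (u₀ : U) (δ : ℝ) :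
    MeasurableSet (crowdedSet u₀ δ : Set (U → E)) := by
  simp only [crowdedSet, Set.ofPred_exists, Set.ofPred_and]
  exact .iUnion fun u => .inter (.const _) (measurableSet_lt (by fun_prop) measurable_const)

variable [Fintype U]

lemma measure_pi_dist_lt_le (ρ : Measure E) [IsProbabilityMeasure ρ] {u v : U} (huv : u ≠ v)
    {δ : ℝ} {b : ℝ≥0∞} (hb : ∀ x, ρ (Metric.ball x δ) ≤ b) :
    (Measure.pi fun _ : U => ρ) {p | dist (p u) (p v) < δ} ≤ b := by
  have hindep : IndepFun (fun p : U → E => p v) (fun p => p u) (Measure.pi fun _ => ρ) :=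
    (iIndepFun_pi (X := fun _ => id) fun _ => aemeasurable_id).indepFun huv.symm
  have hpair := (indepFun_iff_map_prod_eq_prod_map_map (measurable_pi_apply v).aemeasurable
    (measurable_pi_apply u).aemeasurable).1 hindep
  rw [(measurePreserving_eval (fun _ : U => ρ) u).map_eq,
    (measurePreserving_eval (fun _ : U => ρ) v).map_eq] at hpair
  have hmeas : MeasurableSet {z : E × E | dist z.2 z.1 < δ} :=
    measurableSet_lt (by fun_prop) measurable_const
  calc (Measure.pi fun _ : U => ρ) {p | dist (p u) (p v) < δ}
      = (ρ.prod ρ) {z | dist z.2 z.1 < δ} := by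
        rw [← hpair, Measure.map_apply (by fun_prop) hmeas]; rfl
    _ = ∫⁻ x, ρ (Metric.ball x δ) ∂ρ := Measure.prod_apply hmeas
    _ ≤ ∫⁻ _, b ∂ρ := lintegral_mono hb
    _ = b := by simp

lemma measure_pi_crowdedSet_le (ρ : Measure E) [IsProbabilityMeasure ρ] (u₀ : U)
    {δ : ℝ} {b : ℝ≥0∞} (hb : ∀ x, ρ (Metric.ball x δ) ≤ b) :
    (Measure.pi fun _ : U => ρ) (crowdedSet u₀ δ) ≤ Fintype.card U * b := by
  calc (Measure.pi fun _ : U => ρ) (crowdedSet u₀ δ)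
      ≤ ∑ u, (Measure.pi fun _ : U => ρ) {p | u ≠ u₀ ∧ dist (p u) (p u₀) < δ} := by
        rw [crowdedSet, Set.ofPred_exists]; exact measure_iUnion_fintype_le _ _
    _ ≤ ∑ _u : U, b := Finset.sum_le_sum fun u _ => by
        by_cases hu : u = u₀
        · simp [hu]
        · simpa [hu] using measure_pi_dist_lt_le ρ hu hb
    _ = Fintype.card U * b := by simp

end Crowding

section NearestTrace

variable {ι κ S U : Type*} [Fintype ι] [Fintype κ] [Fintype S] [Finite U] [Nonempty U]

/-- The index, among the anonymized traces `y`, of one whose empirical distribution is closest to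
that of the training trace `w`. This is the adversary's guess for the pseudonym of its author. -/
noncomputable def nearestTrace (y : U → ι → S) (w : κ → S) : U :=
  (Finite.exists_min fun v => dist (empFreq (y v)) (empFreq w)).choose

lemma dist_empFreq_nearestTrace_le (y : U → ι → S) (w : κ → S) (v : U) :
    dist (empFreq (y (nearestTrace y w))) (empFreq w) ≤ dist (empFreq (y v)) (empFreq w) :=
  (Finite.exists_min fun v => dist (empFreq (y v)) (empFreq w)).choose_spec v

lemma nearestTrace_permuted_eq {q : U → S → ℝ} {u₀ : U} {ε : ℝ} {x : U → ι → S} {w : U → κ → S}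
    (hq : q ∉ crowdedSet u₀ (4 * ε)) (hx : x ∉ atypicalSet q ε) (hw : w ∉ atypicalSet q ε)
    (σ : Equiv.Perm U) : nearestTrace (fun v => x (σ.symm v)) (w u₀) = σ u₀ := by
  simp only [crowdedSet, atypicalSet, Set.mem_ofPred_eq, not_exists, not_and, not_lt, not_le]
    at hq hx hw
  set u := σ.symm (nearestTrace (fun v => x (σ.symm v)) (w u₀)) with hu
  have hnear : dist (empFreq (x u)) (empFreq (w u₀)) ≤ dist (empFreq (x u₀)) (empFreq (w u₀)) := by
    simpa using dist_empFreq_nearestTrace_le (fun v => x (σ.symm v)) (w u₀) (σ u₀)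
  have htrue : dist (empFreq (x u₀)) (empFreq (w u₀)) < 2 * ε := by
    linarith [dist_triangle_right (empFreq (x u₀)) (empFreq (w u₀)) (q u₀), hx u₀, hw u₀]
  have hclose : dist (q u) (q u₀) < 4 * ε := by
    linarith [dist_triangle4 (q u) (empFreq (x u)) (empFreq (w u₀)) (q u₀),
      dist_comm (q u) (empFreq (x u)), hx u, hw u₀]
  have huu₀ : u = u₀ := by
    by_contra hne
    exact (hq u hne).not_gt hclose
  exact σ.symm_apply_eq.1 (hu.symm.trans huu₀)

end NearestTrace

section Model

variable {r : ℕ}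

instance (q : Fin r → ℝ) : IsFiniteMeasure (catMeasure r q) :=
  ⟨by simp [catMeasure, Measure.finsetSum_apply, ENNReal.sum_lt_top]⟩

lemma isProbabilityMeasure_catMeasure {q : Fin r → ℝ} (hq : q ∈ stdSimplex ℝ (Fin r)) :
    IsProbabilityMeasure (catMeasure r q) where
  measure_univ := by
    simp [catMeasure, Measure.finsetSum_apply, ← ENNReal.ofReal_sum_of_nonneg fun i _ => hq.1 i,
      hq.2]

lemma catMeasure_real_singleton {q : Fin r → ℝ} {i : Fin r} (hi : 0 ≤ q i) :
    (catMeasure r q).real {i} = q i := by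
  simp [catMeasure, Measure.real, Measure.finsetSum_apply, Set.indicator_apply, hi]

@[fun_prop]
lemma measurable_fullProb : Measurable (fullProb r) := by
  refine measurable_pi_lambda _ fun i => ?_
  unfold fullProb
  split_ifs <;> fun_prop

lemma fullProb_succ (p : Fin (r - 1) → ℝ) (j : Fin (r - 1)) :
    fullProb r p ⟨j + 1, by omega⟩ = p j := by
  simp [fullProb]

lemma sum_fullProb (hr : 0 < r) (p : Fin (r - 1) → ℝ) : ∑ i, fullProb r p i = 1 := by
  obtain ⟨d, rfl⟩ := Nat.exists_eq_add_one.2 hr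
  simp [Fin.sum_univ_succ, fullProb]

lemma fullProb_mem_stdSimplex (hr : 0 < r) {p : Fin (r - 1) → ℝ}
    (hp : p ∈ simplexRegion (r - 1)) : fullProb r p ∈ stdSimplex ℝ (Fin r) := by
  refine ⟨fun i => ?_, sum_fullProb hr p⟩
  unfold fullProb
  split_ifs
  · exact (sub_pos.2 hp.2).le
  · exact (hp.1 _).le

lemma dist_le_dist_fullProb (p p' : Fin (r - 1) → ℝ) :
    dist p p' ≤ dist (fullProb r p) (fullProb r p') := by
  refine (dist_pi_le_iff dist_nonneg).2 fun j => ?_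
  simpa only [fullProb_succ] using dist_le_pi_dist (fullProb r p) (fullProb r p') ⟨j + 1, by omega⟩

lemma measurableSet_simplexRegion (d : ℕ) : MeasurableSet (simplexRegion d) := by
  simp only [simplexRegion, Set.ofPred_and, Set.ofPred_forall]
  exact .inter (.iInter fun i => measurableSet_lt measurable_const (measurable_pi_apply i))
    (measurableSet_lt (by fun_prop) measurable_const)

variable {n m l : ℕ}

/-- The conditional law, given the parameters `p`, of one trace of length `m` for each user. -/
noncomputable def traceLaw (m : ℕ) (p : Fin n → Fin (r - 1) → ℝ) :
    Measure (Fin n → Fin m → Fin r) :=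
  Measure.pi fun u => Measure.pi fun _ => catMeasure r (fullProb r (p u))

instance (p : Fin n → Fin (r - 1) → ℝ) : IsFiniteMeasure (traceLaw m p) := by
  unfold traceLaw; infer_instance

lemma isProbabilityMeasure_traceLaw {p : Fin n → Fin (r - 1) → ℝ}
    (hp : ∀ u, fullProb r (p u) ∈ stdSimplex ℝ (Fin r)) : IsProbabilityMeasure (traceLaw m p) := by
  have := fun u => isProbabilityMeasure_catMeasure (hp u)
  unfold traceLaw; infer_instance

lemma traceLaw_atypicalSet_le {p : Fin n → Fin (r - 1) → ℝ}
    (hp : ∀ u, fullProb r (p u) ∈ stdSimplex ℝ (Fin r)) {ε : ℝ} (hε : 0 < ε) :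
    traceLaw m p (atypicalSet (fun u => fullProb r (p u)) ε) ≤
      ENNReal.ofReal (n * (r * (2 * Real.exp (-2 * m * ε ^ 2)))) := by
  have := fun u => isProbabilityMeasure_catMeasure (hp u)
  rw [← ofReal_measureReal]
  refine ENNReal.ofReal_le_ofReal ?_
  simpa [traceLaw, catMeasure_real_singleton ((hp _).1 _)] using
    measureReal_atypicalSet_le (ι := Fin m) (fun u => catMeasure r (fullProb r (p u))) hε

variable {μP : Measure (Fin (r - 1) → ℝ)}

-- An inequality is enough to bound failure probabilities, and it avoids proving that the
-- conditional law of the traces depends measurably on the parameters.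
lemma rStateLaw_apply_le {A : Set ((Fin n → Fin (r - 1) → ℝ) ×
      (Fin n → Fin m → Fin r) × (Fin n → Fin l → Fin r))} (hA : MeasurableSet A) :
    rStateLaw n m l r μP A ≤
      ∫⁻ p, (traceLaw m p).prod (traceLaw l p) (Prod.mk p ⁻¹' A) ∂Measure.pi fun _ => μP := by
  refine (Measure.bind_apply_le _ hA).trans_eq (lintegral_congr fun p => ?_)
  rw [← Measure.map_apply measurable_prodMk_left hA, ← Measure.dirac_prod]
  rfl

variable [IsProbabilityMeasure μP]

lemma ae_pi_fullProb_mem_stdSimplex (hμP : ∀ᵐ p ∂μP, fullProb r p ∈ stdSimplex ℝ (Fin r)) :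
    ∀ᵐ p ∂Measure.pi fun _ : Fin n => μP, ∀ u, fullProb r (p u) ∈ stdSimplex ℝ (Fin r) :=
  ae_all_iff.2 fun u =>
    (measurePreserving_eval (fun _ : Fin n => μP) u).quasiMeasurePreserving.ae hμP

lemma rStateLaw_fst_preimage_le (hμP : ∀ᵐ p ∂μP, fullProb r p ∈ stdSimplex ℝ (Fin r))
    {C : Set (Fin n → Fin (r - 1) → ℝ)} (hC : MeasurableSet C) :
    rStateLaw n m l r μP (Prod.fst ⁻¹' C) ≤ (Measure.pi fun _ => μP) C := by
  rw [← lintegral_indicator_one hC]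
  refine (rStateLaw_apply_le (measurable_fst hC)).trans (lintegral_mono_ae ?_)
  filter_upwards [ae_pi_fullProb_mem_stdSimplex hμP] with p hp
  have := isProbabilityMeasure_traceLaw (m := m) hp
  have := isProbabilityMeasure_traceLaw (m := l) hp
  by_cases hpC : p ∈ C <;> simp [Set.preimage_preimage, hpC]

lemma rStateLaw_le_of_forall_traceLaw_prod_le
    (hμP : ∀ᵐ p ∂μP, fullProb r p ∈ stdSimplex ℝ (Fin r))
    {A : Set ((Fin n → Fin (r - 1) → ℝ) × (Fin n → Fin m → Fin r) × (Fin n → Fin l → Fin r))}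
    (hA : MeasurableSet A) {b : ℝ≥0∞}
    (hb : ∀ p : Fin n → Fin (r - 1) → ℝ, (∀ u, fullProb r (p u) ∈ stdSimplex ℝ (Fin r)) →
      (traceLaw m p).prod (traceLaw l p) (Prod.mk p ⁻¹' A) ≤ b) :
    rStateLaw n m l r μP A ≤ b := by
  calc rStateLaw n m l r μP A
      ≤ ∫⁻ p, (traceLaw m p).prod (traceLaw l p) (Prod.mk p ⁻¹' A) ∂Measure.pi fun _ => μP :=
        rStateLaw_apply_le hA
    _ ≤ ∫⁻ _, b ∂Measure.pi fun _ : Fin n => μP :=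
        lintegral_mono_ae ((ae_pi_fullProb_mem_stdSimplex hμP).mono hb)
    _ = b := by simp

lemma measurableSet_mem_atypicalSet {Z : Type*} [MeasurableSpace Z]
    {p : Z → Fin n → Fin (r - 1) → ℝ} {x : Z → Fin n → Fin m → Fin r} (hp : Measurable p)
    (hx : Measurable x) (ε : ℝ) :
    MeasurableSet {z | x z ∈ atypicalSet (fun u => fullProb r (p z u)) ε} := by
  have hunion : {z | x z ∈ atypicalSet (fun u => fullProb r (p z u)) ε} =
      ⋃ u, {z | ε ≤ dist (empFreq (x z u)) (fullProb r (p z u))} := by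
    ext z
    simp [atypicalSet]
  exact hunion ▸ .iUnion fun u => measurableSet_le measurable_const (by fun_prop)

lemma rStateLaw_atypicalSet_actual_le (hμP : ∀ᵐ p ∂μP, fullProb r p ∈ stdSimplex ℝ (Fin r))
    {ε : ℝ} (hε : 0 < ε) :
    rStateLaw n m l r μP {z | z.2.1 ∈ atypicalSet (fun u => fullProb r (z.1 u)) ε} ≤
      ENNReal.ofReal (n * (r * (2 * Real.exp (-2 * m * ε ^ 2)))) := by
  refine rStateLaw_le_of_forall_traceLaw_prod_le hμP
    (measurableSet_mem_atypicalSet (by fun_prop) (by fun_prop) ε) fun p hp => ?_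
  have := isProbabilityMeasure_traceLaw (m := l) hp
  exact (measurePreserving_fst.measure_preimage (Set.toFinite _).measurableSet.nullMeasurableSet)
    |>.trans_le (traceLaw_atypicalSet_le hp hε)

lemma rStateLaw_atypicalSet_training_le (hμP : ∀ᵐ p ∂μP, fullProb r p ∈ stdSimplex ℝ (Fin r))
    {ε : ℝ} (hε : 0 < ε) :
    rStateLaw n m l r μP {z | z.2.2 ∈ atypicalSet (fun u => fullProb r (z.1 u)) ε} ≤
      ENNReal.ofReal (n * (r * (2 * Real.exp (-2 * l * ε ^ 2)))) := by
  refine rStateLaw_le_of_forall_traceLaw_prod_le hμP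
    (measurableSet_mem_atypicalSet (by fun_prop) (by fun_prop) ε) fun p hp => ?_
  have := isProbabilityMeasure_traceLaw (m := m) hp
  exact (measurePreserving_snd.measure_preimage (Set.toFinite _).measurableSet.nullMeasurableSet)
    |>.trans_le (traceLaw_atypicalSet_le hp hε)

end Model

section MinimalError

variable {Ω O S : Type*} [MeasurableSpace Ω] [MeasurableSpace O] [MeasurableSpace S]

/-- The infimum, over all measurable estimators based on the observation `obs`, of the probability
of incorrectly estimating `target`. -/
noncomputable def minErrorProb (μ : Measure Ω) (obs : Ω → O) (target : Ω → S) : ℝ :=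
  sInf {e : ℝ | ∃ g : O → S, Measurable g ∧ e = (μ {ω | g (obs ω) ≠ target ω}).toReal}

variable {μ : Measure Ω} {obs : Ω → O} {target : Ω → S}

lemma minErrorProb_nonneg : 0 ≤ minErrorProb μ obs target :=
  Real.sInf_nonneg <| by rintro _ ⟨g, -, rfl⟩; exact ENNReal.toReal_nonneg

lemma minErrorProb_le {g : O → S} (hg : Measurable g) :
    minErrorProb μ obs target ≤ (μ {ω | g (obs ω) ≠ target ω}).toReal :=
  csInf_le ⟨0, by rintro _ ⟨g, -, rfl⟩; exact ENNReal.toReal_nonneg⟩ ⟨g, hg, rfl⟩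

end MinimalError

section Deanonymization

variable {Ω : Type*} [MeasurableSpace Ω] {μ : Measure Ω} {n m l r : ℕ}
  {μP : Measure (Fin (r - 1) → ℝ)} {P : Ω → Fin n → Fin (r - 1) → ℝ}
  {X : Ω → Fin n → Fin m → Fin r} {W : Ω → Fin n → Fin l → Fin r}

lemma measure_nearestTrace_ne_le [IsProbabilityMeasure μP]
    (hμP : ∀ᵐ p ∂μP, fullProb r p ∈ stdSimplex ℝ (Fin r))
    (hlaw : HasLaw (fun ω => (P ω, X ω, W ω)) (rStateLaw n m l r μP) μ)
    (perm : Ω → Equiv.Perm (Fin n)) (u₀ : Fin n) [Nonempty (Fin n)] {ε : ℝ} (hε : 0 < ε) {b : ℝ≥0∞}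
    (hb : ∀ x, μP (Metric.ball x (4 * ε)) ≤ b) :
    μ {ω | nearestTrace (fun v => X ω ((perm ω).symm v)) (W ω u₀) ≠ perm ω u₀} ≤
      n * b + ENNReal.ofReal (n * (r * (2 * Real.exp (-2 * m * ε ^ 2)))) +
        ENNReal.ofReal (n * (r * (2 * Real.exp (-2 * l * ε ^ 2)))) := by
  have hsub : {ω | nearestTrace (fun v => X ω ((perm ω).symm v)) (W ω u₀) ≠ perm ω u₀} ⊆
      {ω | P ω ∈ crowdedSet u₀ (4 * ε)} ∪
        {ω | X ω ∈ atypicalSet (fun u => fullProb r (P ω u)) ε} ∪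
        {ω | W ω ∈ atypicalSet (fun u => fullProb r (P ω u)) ε} := by
    intro ω
    contrapose!
    simp only [Set.mem_union, not_or, Set.mem_ofPred_eq, not_not]
    rintro ⟨⟨hcrowded, hactual⟩, htraining⟩
    refine nearestTrace_permuted_eq (fun ⟨u, hu, hdist⟩ => hcrowded ⟨u, hu, ?_⟩)
      hactual htraining (perm ω)
    exact (dist_le_dist_fullProb _ _).trans_lt hdist
  have hcrowded : μ {ω | P ω ∈ crowdedSet u₀ (4 * ε)} ≤ n * b := by
    have hmeas := measurableSet_crowdedSet (E := Fin (r - 1) → ℝ) u₀ (4 * ε)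
    exact (hlaw.measure_eq (p := fun z => z.1 ∈ crowdedSet u₀ (4 * ε))
      (measurable_fst hmeas)).trans_le <| (rStateLaw_fst_preimage_le hμP hmeas).trans <|
        (measure_pi_crowdedSet_le μP u₀ hb).trans_eq (by simp)
  have hactual : μ {ω | X ω ∈ atypicalSet (fun u => fullProb r (P ω u)) ε} ≤
      ENNReal.ofReal (n * (r * (2 * Real.exp (-2 * m * ε ^ 2)))) :=
    (hlaw.measure_eq (p := fun z => z.2.1 ∈ atypicalSet (fun u => fullProb r (z.1 u)) ε)
      (measurableSet_mem_atypicalSet (by fun_prop) (by fun_prop) ε)).trans_le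
      (rStateLaw_atypicalSet_actual_le hμP hε)
  have htraining : μ {ω | W ω ∈ atypicalSet (fun u => fullProb r (P ω u)) ε} ≤
      ENNReal.ofReal (n * (r * (2 * Real.exp (-2 * l * ε ^ 2)))) :=
    (hlaw.measure_eq (p := fun z => z.2.2 ∈ atypicalSet (fun u => fullProb r (z.1 u)) ε)
      (measurableSet_mem_atypicalSet (by fun_prop) (by fun_prop) ε)).trans_le
      (rStateLaw_atypicalSet_training_le hμP hε)
  calc μ {ω | nearestTrace (fun v => X ω ((perm ω).symm v)) (W ω u₀) ≠ perm ω u₀}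
      ≤ μ {ω | P ω ∈ crowdedSet u₀ (4 * ε)} +
          μ {ω | X ω ∈ atypicalSet (fun u => fullProb r (P ω u)) ε} +
          μ {ω | W ω ∈ atypicalSet (fun u => fullProb r (P ω u)) ε} :=
        (measure_mono hsub).trans
          ((measure_union_le _ _).trans (add_le_add_left (measure_union_le _ _) _))
    _ ≤ _ := add_le_add (add_le_add hcrowded hactual) htraining

theorem minErrorProb_le_of_hasLaw_rStateLaw [IsProbabilityMeasure μP]
    (hμP : ∀ᵐ p ∂μP, fullProb r p ∈ stdSimplex ℝ (Fin r))
    (hlaw : HasLaw (fun ω => (P ω, X ω, W ω)) (rStateLaw n m l r μP) μ)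
    (perm : Ω → Equiv.Perm (Fin n)) (u₀ : Fin n) (k : Fin m) {ε : ℝ} (hε : 0 < ε) {b : ℝ}
    (hb0 : 0 ≤ b) (hb : ∀ x, μP (Metric.ball x (4 * ε)) ≤ ENNReal.ofReal b) :
    minErrorProb μ (fun ω => (W ω, fun v => X ω ((perm ω).symm v))) (fun ω => X ω u₀ k) ≤
      n * b + n * (r * (2 * Real.exp (-2 * m * ε ^ 2))) +
        n * (r * (2 * Real.exp (-2 * l * ε ^ 2))) := by
  have : Nonempty (Fin n) := ⟨u₀⟩
  let g : (Fin n → Fin l → Fin r) × (Fin n → Fin m → Fin r) → Fin r :=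
    fun o => o.2 (nearestTrace o.2 (o.1 u₀)) k
  refine (minErrorProb_le (g := g) (measurable_of_countable _)).trans
    (ENNReal.toReal_le_of_le_ofReal (by positivity) ?_)
  rw [ENNReal.ofReal_add (by positivity) (by positivity),
    ENNReal.ofReal_add (by positivity) (by positivity), ENNReal.ofReal_mul (by positivity),
    ENNReal.ofReal_natCast]
  have hsub : {ω | g (W ω, fun v => X ω ((perm ω).symm v)) ≠ X ω u₀ k} ⊆
      {ω | nearestTrace (fun v => X ω ((perm ω).symm v)) (W ω u₀) ≠ perm ω u₀} := by
    intro ω hne heq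
    exact hne (by simp [g, heq])
  exact (measure_mono hsub).trans (measure_nearestTrace_ne_le hμP hlaw perm u₀ hε hb)

lemma hasLaw_of_measure_eq_inv_card_mul {E G : Type*} [MeasurableSpace E] [Fintype G] [Nonempty G]
    {L : Measure E} {T : Ω → E} (hT : Measurable T) {A : Ω → G}
    (hA : ∀ a, MeasurableSet {ω | A ω = a})
    (h : ∀ a s, MeasurableSet s →
      μ {ω | A ω = a ∧ T ω ∈ s} = (Fintype.card G : ℝ≥0∞)⁻¹ * L s) : HasLaw T L μ where
  aemeasurable := hT.aemeasurable
  map_eq := by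
    ext s hs
    have hpartition : T ⁻¹' s = ⋃ a, {ω | A ω = a ∧ T ω ∈ s} := by ext; simp
    rw [Measure.map_apply hT hs, hpartition, measure_iUnion, tsum_fintype]
    · simp [h _ s hs, ← mul_assoc, ENNReal.mul_inv_cancel]
    · exact fun a b hab => Set.disjoint_left.2 fun ω ha hb => hab (ha.1.symm.trans hb.1)
    · exact fun a => (hA a).inter (hT hs)

end Deanonymization

section BoundedDensity

lemma withDensity_ball_le {d : ℕ} {f : (Fin d → ℝ) → ℝ≥0∞} {K : ℝ≥0} (hf : ∀ x, f x ≤ K)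
    (x : Fin d → ℝ) {ε : ℝ} (hε : 0 < ε) :
    volume.withDensity f (Metric.ball x ε) ≤
      ENNReal.ofReal ((K * 2 ^ d : ℝ≥0) * ε ^ (d : ℝ)) := by
  calc volume.withDensity f (Metric.ball x ε)
      ≤ volume.withDensity (fun _ => (K : ℝ≥0∞)) (Metric.ball x ε) :=
        withDensity_mono (Eventually.of_forall hf) _
    _ = ENNReal.ofReal ((K * 2 ^ d : ℝ≥0) * ε ^ (d : ℝ)) := by
        rw [withDensity_const, Measure.smul_apply, Real.volume_pi_ball x hε, smul_eq_mul,
          ← ENNReal.ofReal_coe_nnreal, ← ENNReal.ofReal_mul K.coe_nonneg, Fintype.card_fin, mul_pow,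
          Real.rpow_natCast, ← mul_assoc]
        simp

lemma ae_fullProb_mem_stdSimplex {r : ℕ} (hr : 0 < r) {f : (Fin (r - 1) → ℝ) → ℝ≥0∞}
    (hf : ∀ x ∉ simplexRegion (r - 1), f x = 0) :
    ∀ᵐ p ∂volume.withDensity f, fullProb r p ∈ stdSimplex ℝ (Fin r) := by
  have hsupp : ∀ᵐ p ∂volume.withDensity f, p ∈ simplexRegion (r - 1) := by
    have hcompl := (measurableSet_simplexRegion (r - 1)).compl
    refine mem_ae_iff.2 ((withDensity_apply f hcompl).trans ?_)
    simp [setLIntegral_congr_fun hcompl hf]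
  exact hsupp.mono fun p => fullProb_mem_stdSimplex hr

end BoundedDensity

section Asymptotics

lemma tendsto_natCast_mul_exp_neg_of_isBigO {β : ℝ} (hβ : 0 < β) {g : ℕ → ℝ} (hg : ∀ n, 0 ≤ g n)
    (h : (fun n : ℕ => (n : ℝ) ^ β) =O[atTop] g) :
    Tendsto (fun n : ℕ => (n : ℝ) * Real.exp (-g n)) atTop (𝓝 0) := by
  obtain ⟨C, hC, hbound⟩ := h.exists_pos
  have hlim : Tendsto (fun n : ℕ => (n : ℝ) * Real.exp (-C⁻¹ * (n : ℝ) ^ β)) atTop (𝓝 0) := by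
    refine ((tendsto_rpow_mul_exp_neg_mul_atTop_nhds_zero β⁻¹ C⁻¹ (inv_pos.2 hC)).comp
      ((tendsto_rpow_atTop hβ).comp tendsto_natCast_atTop_atTop)).congr fun n => ?_
    simp only [Function.comp_apply, Real.rpow_rpow_inv (Nat.cast_nonneg n) hβ.ne']
  refine squeeze_zero' (Eventually.of_forall fun n => by positivity) ?_ hlim
  filter_upwards [hbound.bound] with n hn
  rw [Real.norm_of_nonneg (by positivity), Real.norm_of_nonneg (hg n)] at hn
  have : C⁻¹ * (n : ℝ) ^ β ≤ g n := (inv_mul_le_iff₀ hC).2 hn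
  gcongr
  linarith

lemma isBigO_of_eq_natCeil {c : ℝ} (hc : 0 < c) {φ : ℕ → ℝ} {m : ℕ → ℕ}
    (hm : ∀ n, m n = ⌈c * φ n⌉₊) (hφ : ∀ n, 0 ≤ φ n) : φ =O[atTop] fun n => (m n : ℝ) := by
  refine .of_bound c⁻¹ (Eventually.of_forall fun n => ?_)
  rw [Real.norm_of_nonneg (hφ n), Real.norm_natCast, le_inv_mul_iff₀ hc, hm]
  exact Nat.le_ceil _

/-- The scale `εₙ` at which traces of `n` users are matched when `μP` is `s`-dimensional. The
exponent makes `n εₙ ^ s` tend to `0`, while `m εₙ ^ 2` is still a positive power of `n` for traces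
of length `m ≈ n ^ (2 / s + α)`. -/
noncomputable def matchingScale (s α : ℝ) (n : ℕ) : ℝ := (n : ℝ) ^ (-(1 / s) - α / 4)

variable {s α : ℝ}

lemma matchingScale_pos {n : ℕ} (hn : 0 < n) : 0 < matchingScale s α n :=
  Real.rpow_pos_of_pos (Nat.cast_pos.2 hn) _

lemma tendsto_natCast_mul_matchingScale_rpow (hs : 0 < s) (hα : 0 < α) :
    Tendsto (fun n : ℕ => (n : ℝ) * matchingScale s α n ^ s) atTop (𝓝 0) := by
  refine ((tendsto_rpow_neg_atTop (y := s * α / 4) (by positivity)).comp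
    tendsto_natCast_atTop_atTop).congr' ?_
  filter_upwards [eventually_gt_atTop 0] with n hn
  have hn' : (0 : ℝ) < n := Nat.cast_pos.2 hn
  rw [Function.comp_apply, matchingScale, ← Real.rpow_mul hn'.le]
  nth_rewrite 2 [← Real.rpow_one (n : ℝ)]
  rw [← Real.rpow_add hn']
  congr 1
  field_simp
  ring

lemma isBigO_mul_matchingScale_sq (hs : s ≠ 0) {m : ℕ → ℝ}
    (hm : (fun n : ℕ => (n : ℝ) ^ (2 / s + α)) =O[atTop] m) :
    (fun n : ℕ => (n : ℝ) ^ (α / 2)) =O[atTop] fun n => m n * matchingScale s α n ^ 2 := by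
  refine (hm.mul (Asymptotics.isBigO_refl (fun n => matchingScale s α n ^ 2) atTop)).congr' ?_ .rfl
  filter_upwards [eventually_gt_atTop 0] with n hn
  have hn' : (0 : ℝ) < n := Nat.cast_pos.2 hn
  rw [matchingScale, ← Real.rpow_mul_natCast hn'.le, ← Real.rpow_add hn']
  congr 1
  push_cast
  field_simp
  ring

lemma tendsto_natCast_mul_exp_neg_mul_matchingScale_sq (hs : s ≠ 0) (hα : 0 < α) {m : ℕ → ℕ}
    (hm : (fun n : ℕ => (n : ℝ) ^ (2 / s + α)) =O[atTop] fun n => (m n : ℝ)) :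
    Tendsto (fun n : ℕ => (n : ℝ) * Real.exp (-2 * m n * matchingScale s α n ^ 2))
      atTop (𝓝 0) := by
  simpa [mul_assoc] using tendsto_natCast_mul_exp_neg_of_isBigO (half_pos hα)
    (fun n => by positivity) ((isBigO_mul_matchingScale_sq hs hm).const_mul_right two_ne_zero)

end Asymptotics

theorem r_state_no_privacy_general {r : ℕ} {s α : ℝ} {K : ℝ≥0} (hs : 0 < s) (hα : 0 < α)
    {μP : Measure (Fin (r - 1) → ℝ)} [IsProbabilityMeasure μP]
    (hsimplex : ∀ᵐ p ∂μP, fullProb r p ∈ stdSimplex ℝ (Fin r))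
    (hball : ∀ x, ∀ ε > 0, μP (Metric.ball x ε) ≤ ENNReal.ofReal (K * ε ^ s))
    {m l : ℕ → ℕ} (hm : (fun n : ℕ => (n : ℝ) ^ (2 / s + α)) =O[atTop] fun n => (m n : ℝ))
    (hl : (fun n : ℕ => (n : ℝ) ^ (2 / s + α)) =O[atTop] fun n => (l n : ℝ))
    {Ω : ℕ → Type*} {mΩ : ∀ n, MeasurableSpace (Ω n)} {μ : ∀ n, Measure (Ω n)}
    {P : ∀ n, Ω n → Fin n → Fin (r - 1) → ℝ} {X : ∀ n, Ω n → Fin n → Fin (m n) → Fin r}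
    {W : ∀ n, Ω n → Fin n → Fin (l n) → Fin r}
    (hlaw : ∀ n, HasLaw (fun ω => (P n ω, X n ω, W n ω)) (rStateLaw n (m n) (l n) r μP) (μ n))
    (perm : ∀ n, Ω n → Equiv.Perm (Fin n))
    (u : ∀ n : ℕ, 0 < n → Fin n) (k : ∀ n : ℕ, 0 < n → Fin (m n)) :
    Tendsto (fun n =>
        if hn : 0 < n then
          minErrorProb (μ n) (fun ω => (W n ω, fun v => X n ω ((perm n ω).symm v)))
            (fun ω => X n ω (u n hn) (k n hn))
        else 0)
      atTop (𝓝 0) := by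
  set ε := matchingScale s α
  have hcrowded := (tendsto_natCast_mul_matchingScale_rpow hs hα).const_mul ((K : ℝ) * 4 ^ s)
  have hactual := (tendsto_natCast_mul_exp_neg_mul_matchingScale_sq hs.ne' hα hm).const_mul
    (2 * (r : ℝ))
  have htraining := (tendsto_natCast_mul_exp_neg_mul_matchingScale_sq hs.ne' hα hl).const_mul
    (2 * (r : ℝ))
  have hlim := (hcrowded.add hactual).add htraining
  simp only [mul_zero, add_zero] at hlim
  refine squeeze_zero' (Eventually.of_forall fun n => ?_) ?_ hlim
  · split_ifs
    exacts [minErrorProb_nonneg, le_rfl]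
  · filter_upwards [eventually_gt_atTop 0] with n hn
    have hε : 0 < ε n := matchingScale_pos hn
    rw [dif_pos hn]
    refine (minErrorProb_le_of_hasLaw_rStateLaw hsimplex (hlaw n) (perm n) (u n hn) (k n hn) hε
      (b := K * (4 * ε n) ^ s) (by positivity) fun x => hball x _ (by positivity)).trans_eq ?_
    rw [Real.mul_rpow (by norm_num) hε.le]
    simp only [ε]
    ring

/-- **`r`-state i.i.d. model, no privacy.**  If `m n = ⌈c n^(2/(r-1)+α)⌉` and
`l n = ⌈c' n^(2/(r-1)+α)⌉` for some `c, c', α > 0`, then user 1 has no privacy at every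
time `k`: the infimum over all estimators (measurable functions of the adversary's
observations `(W, Y)`, where `Y v = X (Π⁻¹ v)` is the anonymized data, taking values in
`{0, …, r-1}`) of the probability of incorrectly estimating `X_1(k)` tends to `0`
as `n → ∞`. -/
theorem r_state_no_privacy
    (r : ℕ) (hr : 2 ≤ r)
    (f : (Fin (r - 1) → ℝ) → ℝ) (δ₁ δ₂ : ℝ) (hδ₁ : 0 < δ₁)
    (μP : Measure (Fin (r - 1) → ℝ)) [IsProbabilityMeasure μP]
    (hμP : μP = volume.withDensity fun x => ENNReal.ofReal (f x))
    (hf0 : ∀ x ∉ simplexRegion (r - 1), f x = 0)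
    (hf : ∀ x ∈ simplexRegion (r - 1), δ₁ < f x ∧ f x < δ₂)
    (m l : ℕ → ℕ) (c c' α : ℝ) (hc : 0 < c) (hc' : 0 < c') (hα : 0 < α)
    (hm : ∀ n : ℕ, m n = ⌈c * (n : ℝ) ^ (2 / ((r : ℝ) - 1) + α)⌉₊)
    (hl : ∀ n : ℕ, l n = ⌈c' * (n : ℝ) ^ (2 / ((r : ℝ) - 1) + α)⌉₊)
    (Ω : ℕ → Type) (mΩ : ∀ n, MeasurableSpace (Ω n))
    (μ : ∀ n, Measure (Ω n)) (hμ : ∀ n, IsProbabilityMeasure (μ n))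
    (P : ∀ n, Ω n → Fin n → Fin (r - 1) → ℝ)
    (X : ∀ n, Ω n → Fin n → Fin (m n) → Fin r)
    (W : ∀ n, Ω n → Fin n → Fin (l n) → Fin r)
    (prm : ∀ n, Ω n → Equiv.Perm (Fin n))
    (hP : ∀ n, Measurable (P n)) (hX : ∀ n, Measurable (X n))
    (hW : ∀ n, Measurable (W n))
    (hprm : ∀ n (σ : Equiv.Perm (Fin n)), MeasurableSet {ω | prm n ω = σ})
    -- `Π` is uniform on the `n!` permutations, independent of `(P, X, W)`, and
    -- `(P, X, W)` has the `r`-state i.i.d. law described above: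
    (hjoint : ∀ n (σ : Equiv.Perm (Fin n))
        (s : Set ((Fin n → Fin (r - 1) → ℝ) ×
          (Fin n → Fin (m n) → Fin r) × (Fin n → Fin (l n) → Fin r))),
        MeasurableSet s →
        μ n {ω | prm n ω = σ ∧ (P n ω, X n ω, W n ω) ∈ s} =
          ((n.factorial : ℝ≥0∞))⁻¹ * rStateLaw n (m n) (l n) r μP s)
    -- an arbitrary choice of a time `k n ∈ {1, …, m n}` for each `n`:
    (k : ∀ n : ℕ, 0 < n → Fin (m n)) :
    Tendsto (fun n =>
        if hn : 0 < n then
          sInf {e : ℝ |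
            ∃ g : (Fin n → Fin (l n) → Fin r) × (Fin n → Fin (m n) → Fin r) → Fin r,
              Measurable g ∧
              e = (μ n {ω |
                    g (W n ω, fun v => X n ω ((prm n ω).symm v)) ≠ X n ω ⟨0, hn⟩ (k n hn)}).toReal}
        else 0)
      atTop (nhds 0) := by
  subst hμP
  have hdim : ((r - 1 : ℕ) : ℝ) = (r : ℝ) - 1 := by rw [Nat.cast_sub (by omega), Nat.cast_one]
  have hdensity : ∀ x, ENNReal.ofReal (f x) ≤ δ₂.toNNReal := fun x => by
    by_cases hx : x ∈ simplexRegion (r - 1)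
    · exact ENNReal.ofReal_le_ofReal (hf x hx).2.le
    · simp [hf0 x hx]
  rw [← hdim] at hm hl
  exact r_state_no_privacy_general (Nat.cast_pos.2 (by omega)) hα
    (ae_fullProb_mem_stdSimplex (by omega) fun x hx => by simp [hf0 x hx])
    (fun x ε hε => withDensity_ball_le hdensity x hε)
    (isBigO_of_eq_natCeil hc hm fun n => by positivity)
    (isBigO_of_eq_natCeil hc' hl fun n => by positivity)
    (fun n => hasLaw_of_measure_eq_inv_card_mul ((hP n).prodMk ((hX n).prodMk (hW n))) (hprm n)
      (by simpa [Fintype.card_perm] using hjoint n))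
    prm (fun n hn => ⟨0, hn⟩) k
end

section
/- In the two-state i.i.d. model with l(n) = ⌈c'·n^{2+α}⌉ for some constants c' > 0 and α > 0, and with Δ_n = n^{−(1+α/4)}, the training-trace empirical means W̄_u = (W_u(1)+⋯+W_u(l))/l satisfy P(⋃_{u=2}^n {|W̄_u − W̄_1| ≤ 2Δ_n}) → 0 as n → ∞. -/
/-!
If the parameters of users `1` and `u` are more than `4Δ` apart, their empirical means can be
within `2Δ` only if one of the two means misses its parameter by at least `Δ`. A density bounded by
`K` makes the parameters `4Δ`-close with probability at most `8KΔ`, and Hoeffding's inequality makes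
a deviation of `Δ` over `l` samples have probability at most `2 exp (-2lΔ²)`. Union bounds over the
`n` users leave `8KnΔ + 2n exp (-2lΔ²)`; at the scales of the theorem `nΔ = n^(-α/4)` and
`lΔ² ≥ c' n^(α/2)`.
-/

open MeasureTheory ProbabilityTheory Filter
open scoped ENNReal NNReal

/-- Bernoulli measure on `Bool` with success probability `p`. -/
noncomputable def bern (p : ℝ) : Measure Bool :=
  ENNReal.ofReal p • Measure.dirac true + ENNReal.ofReal (1 - p) • Measure.dirac false

/-- Joint law of (parameters, training traces) in the two-state i.i.d. model: the
parameters `p u` are i.i.d. with law `μP`, and conditionally on the parameters the `n`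
training traces (of length `l`) consist of i.i.d. `Bernoulli (p u)` samples, mutually
independent across users. -/
noncomputable def twoStateTrainLaw (n l : ℕ) (μP : Measure ℝ) :
    Measure ((Fin n → ℝ) × (Fin n → Fin l → Bool)) :=
  (Measure.pi fun _ : Fin n => μP).bind fun p =>
    (Measure.dirac p).prod
      (Measure.pi fun u : Fin n => Measure.pi fun _ : Fin l => bern (p u))

/-- Empirical mean of a Boolean sample. -/
noncomputable def empMean {l : ℕ} (w : Fin l → Bool) : ℝ :=
  (∑ k : Fin l, if w k then (1 : ℝ) else 0) / l

section ProductMeasures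

variable {ι : Type*} [Fintype ι]

lemma measurePreserving_prodMk_eval {X : ι → Type*} [∀ i, MeasurableSpace (X i)]
    (ν : ∀ i, Measure (X i)) [∀ i, IsProbabilityMeasure (ν i)] {i j : ι} (hij : i ≠ j) :
    MeasurePreserving (fun x : ∀ k, X k ↦ (x i, x j)) (Measure.pi ν) ((ν i).prod (ν j)) where
  measurable := by fun_prop
  map_eq := by
    have hindep : IndepFun (fun x : ∀ k, X k ↦ x i) (fun x ↦ x j) (Measure.pi ν) :=
      (iIndepFun_pi (X := fun _ ↦ id) fun _ ↦ aemeasurable_id).indepFun hij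
    rw [hindep.map_prod_eq_prod_map_map (measurable_pi_apply i).aemeasurable
      (measurable_pi_apply j).aemeasurable]
    exact congrArg₂ Measure.prod (measurePreserving_eval ν i).map_eq
      (measurePreserving_eval ν j).map_eq

variable {X : Type*} [PseudoMetricSpace X] [SecondCountableTopology X] [MeasurableSpace X]
  [OpensMeasurableSpace X] {ν : Measure X} [IsProbabilityMeasure ν] {r : ℝ} {B : ℝ≥0∞}

lemma measure_pi_dist_le {i j : ι} (hij : i ≠ j)
    (hB : ∀ y, ν (Metric.closedBall y r) ≤ B) :
    Measure.pi (fun _ : ι ↦ ν) {x | dist (x i) (x j) ≤ r} ≤ B := by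
  have hmeas : MeasurableSet {q : X × X | dist q.2 q.1 ≤ r} :=
    measurableSet_le (by fun_prop) measurable_const
  calc Measure.pi (fun _ : ι ↦ ν) {x | dist (x i) (x j) ≤ r}
      = ν.prod ν {q | dist q.2 q.1 ≤ r} :=
        (measurePreserving_prodMk_eval (fun _ ↦ ν) hij.symm).measure_preimage
          hmeas.nullMeasurableSet
    _ = ∫⁻ y, ν (Metric.closedBall y r) ∂ν := Measure.prod_apply hmeas
    _ ≤ ∫⁻ _, B ∂ν := lintegral_mono hB
    _ = B := by simp only [lintegral_const, measure_univ, mul_one]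

lemma measure_pi_exists_dist_le (j : ι) (hB : ∀ y, ν (Metric.closedBall y r) ≤ B) :
    Measure.pi (fun _ : ι ↦ ν) {x | ∃ i, i ≠ j ∧ dist (x i) (x j) ≤ r} ≤ Fintype.card ι * B := by
  have hunion : {x : ι → X | ∃ i, i ≠ j ∧ dist (x i) (x j) ≤ r} =
      ⋃ i, {x | i ≠ j ∧ dist (x i) (x j) ≤ r} := Set.ofPred_exists _
  calc Measure.pi (fun _ : ι ↦ ν) {x | ∃ i, i ≠ j ∧ dist (x i) (x j) ≤ r}
      ≤ ∑ i, Measure.pi (fun _ : ι ↦ ν) {x | i ≠ j ∧ dist (x i) (x j) ≤ r} :=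
        hunion ▸ measure_iUnion_fintype_le _ _
    _ ≤ ∑ _i : ι, B := by
        refine Finset.sum_le_sum fun i _ ↦ ?_
        rcases eq_or_ne i j with rfl | hij
        · simp
        · simpa only [hij, ne_eq, not_false_eq_true, true_and] using measure_pi_dist_le hij hB
    _ = Fintype.card ι * B := by
        rw [Finset.sum_const, Finset.card_univ, nsmul_eq_mul]

end ProductMeasures

section Concentration

lemma measureReal_abs_ge_le_of_hasSubgaussianMGF {Ω : Type*} [MeasurableSpace Ω] {μ : Measure Ω}
    [IsFiniteMeasure μ] {X : Ω → ℝ} {c : ℝ≥0} (hX : HasSubgaussianMGF X c μ) {ε : ℝ} (hε : 0 ≤ ε) :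
    μ.real {ω | ε ≤ |X ω|} ≤ 2 * Real.exp (-ε ^ 2 / (2 * c)) := by
  have hunion : {ω | ε ≤ |X ω|} = {ω | ε ≤ X ω} ∪ {ω | ε ≤ (-X) ω} := by
    ext ω
    exact le_abs (a := ε)
  calc μ.real {ω | ε ≤ |X ω|}
      ≤ μ.real {ω | ε ≤ X ω} + μ.real {ω | ε ≤ (-X) ω} := hunion ▸ measureReal_union_le _ _
    _ ≤ Real.exp (-ε ^ 2 / (2 * c)) + Real.exp (-ε ^ 2 / (2 * c)) :=
        add_le_add (hX.measure_ge_le hε) (hX.neg.measure_ge_le hε)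
    _ = 2 * Real.exp (-ε ^ 2 / (2 * c)) := (two_mul _).symm

lemma hasSubgaussianMGF_sum_pi {ι : Type*} [Fintype ι] {X : ι → Type*} [∀ i, MeasurableSpace (X i)]
    {ν : ∀ i, Measure (X i)} [∀ i, IsProbabilityMeasure (ν i)] {g : ∀ i, X i → ℝ} {c : ι → ℝ≥0}
    (hg : ∀ i, HasSubgaussianMGF (g i) (c i) (ν i)) :
    HasSubgaussianMGF (fun x ↦ ∑ i, g i (x i)) (∑ i, c i) (Measure.pi ν) := by
  refine .sum_of_iIndepFun (iIndepFun_pi fun i ↦ (hg i).aemeasurable) fun i _ ↦ ?_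
  have heval := measurePreserving_eval ν i
  exact .of_map heval.measurable.aemeasurable (heval.map_eq.symm ▸ hg i)

end Concentration

section Bernoulli

variable {p : ℝ}

instance (p : ℝ) : IsFiniteMeasure (bern p) :=
  ⟨by simp [bern]⟩

lemma isProbabilityMeasure_bern (hp : p ∈ Set.Icc (0 : ℝ) 1) : IsProbabilityMeasure (bern p) where
  measure_univ := by
    simp [bern, ← ENNReal.ofReal_add hp.1 (sub_nonneg.2 hp.2)]

lemma integral_bern {E : Type*} [NormedAddCommGroup E] [NormedSpace ℝ E] [CompleteSpace E]
    (hp : p ∈ Set.Icc (0 : ℝ) 1) (g : Bool → E) :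
    ∫ b, g b ∂bern p = p • g true + (1 - p) • g false := by
  have hint (a : ℝ) (b : Bool) : Integrable g (ENNReal.ofReal a • Measure.dirac b) :=
    (integrable_dirac (by simp)).smul_measure ENNReal.ofReal_ne_top
  rw [bern, integral_add_measure (hint _ _) (hint _ _), integral_smul_measure,
    integral_smul_measure, integral_dirac, integral_dirac, ENNReal.toReal_ofReal hp.1,
    ENNReal.toReal_ofReal (sub_nonneg.2 hp.2)]

lemma hasSubgaussianMGF_bern (hp : p ∈ Set.Icc (0 : ℝ) 1) :
    HasSubgaussianMGF (fun b : Bool ↦ (if b then (1 : ℝ) else 0) - p) (1 / 4) (bern p) := by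
  have := isProbabilityMeasure_bern hp
  have hmean : ∫ b, (if b then (1 : ℝ) else 0) ∂bern p = p := by
    simp [integral_bern hp]
  have hvar : (‖(1 : ℝ) - 0‖₊ / 2) ^ 2 = 1 / 4 := by
    simp only [sub_zero, nnnorm_one]; norm_num
  have hoeffding := hasSubgaussianMGF_of_mem_Icc (μ := bern p) (a := 0) (b := 1)
    (X := fun b : Bool ↦ if b then (1 : ℝ) else 0) (measurable_of_finite _).aemeasurable
    (Eventually.of_forall fun b ↦ by cases b <;> simp)
  rwa [hmean, hvar] at hoeffding

lemma measure_abs_empMean_sub_ge_le (hp : p ∈ Set.Icc (0 : ℝ) 1) (l : ℕ) {ε : ℝ} (hε : 0 ≤ ε) :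
    Measure.pi (fun _ : Fin l ↦ bern p) {w | ε ≤ |empMean w - p|} ≤
      ENNReal.ofReal (2 * Real.exp (-2 * l * ε ^ 2)) := by
  have := isProbabilityMeasure_bern hp
  rcases l.eq_zero_or_pos with rfl | hl
  · exact prob_le_one.trans (by simp)
  have hl' : (0 : ℝ) < l := Nat.cast_pos.2 hl
  have hsum (w : Fin l → Bool) :
      ∑ k, ((if w k then (1 : ℝ) else 0) - p) = l * (empMean w - p) := by
    rw [Finset.sum_sub_distrib, empMean, mul_sub, mul_div_cancel₀ _ hl'.ne']
    simp
  have hevent : {w : Fin l → Bool | ε ≤ |empMean w - p|} =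
      {w | l * ε ≤ |∑ k, ((if w k then (1 : ℝ) else 0) - p)|} := by
    ext w
    simp only [Set.mem_ofPred_eq, hsum, abs_mul, abs_of_pos hl', mul_le_mul_iff_right₀ hl']
  have htail := measureReal_abs_ge_le_of_hasSubgaussianMGF
    (hasSubgaussianMGF_sum_pi fun _ : Fin l ↦ hasSubgaussianMGF_bern hp)
    (mul_nonneg hl'.le hε)
  have hexp : -(l * ε) ^ 2 / (2 * ((∑ _k : Fin l, 1 / 4 : ℝ≥0) : ℝ)) = -2 * l * ε ^ 2 := by
    rw [Finset.sum_const, Finset.card_univ, Fintype.card_fin, nsmul_eq_mul]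
    push_cast
    field
  rw [hexp] at htail
  rw [hevent, ← ofReal_measureReal]
  exact ENNReal.ofReal_le_ofReal htail

end Bernoulli

section MeanCollision

/-- The event, on families of training traces, that the empirical mean of some other user is within
`ε` of that of user `v`. -/
def meanCollision {ι : Type*} (l : ℕ) (v : ι) (ε : ℝ) : Set (ι → Fin l → Bool) :=
  {w | ∃ u, u ≠ v ∧ |empMean (w u) - empMean (w v)| ≤ ε}

variable {ι : Type*} {l : ℕ} {v : ι} {Δ : ℝ}

lemma exists_abs_empMean_sub_ge_of_mem_meanCollision {p : ι → ℝ}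
    (hsep : ∀ u, u ≠ v → 4 * Δ < |p u - p v|) {w : ι → Fin l → Bool}
    (hw : w ∈ meanCollision l v (2 * Δ)) :
    ∃ u, Δ ≤ |empMean (w u) - p u| := by
  obtain ⟨u, huv, hclose⟩ := hw
  by_contra! hconc
  have htriangle : |p u - p v| ≤ |empMean (w u) - p u| + |empMean (w u) - empMean (w v)| +
      |empMean (w v) - p v| := by
    simpa only [Real.dist_eq, abs_sub_comm (p u) (empMean (w u))] using
      dist_triangle4 (p u) (empMean (w u)) (empMean (w v)) (p v)
  linarith [hsep u huv, hconc u, hconc v]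

lemma measure_meanCollision_le_of_separated [Fintype ι] {p : ι → ℝ}
    (hp : ∀ u, p u ∈ Set.Icc (0 : ℝ) 1) (hΔ : 0 ≤ Δ)
    (hsep : ∀ u, u ≠ v → 4 * Δ < |p u - p v|) :
    Measure.pi (fun u ↦ Measure.pi fun _ : Fin l ↦ bern (p u)) (meanCollision l v (2 * Δ)) ≤
      Fintype.card ι * ENNReal.ofReal (2 * Real.exp (-2 * l * Δ ^ 2)) := by
  have (u : ι) := isProbabilityMeasure_bern (hp u)
  set ν := Measure.pi fun u ↦ Measure.pi fun _ : Fin l ↦ bern (p u)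
  have hsub : meanCollision l v (2 * Δ) ⊆
      ⋃ u, Function.eval u ⁻¹' {x : Fin l → Bool | Δ ≤ |empMean x - p u|} := fun _ hw ↦
    Set.mem_iUnion.2 (exists_abs_empMean_sub_ge_of_mem_meanCollision hsep hw)
  calc ν (meanCollision l v (2 * Δ))
      ≤ ∑ u, ν (Function.eval u ⁻¹' {x : Fin l → Bool | Δ ≤ |empMean x - p u|}) :=
        (measure_mono hsub).trans (measure_iUnion_fintype_le _ _)
    _ ≤ ∑ _u : ι, ENNReal.ofReal (2 * Real.exp (-2 * l * Δ ^ 2)) := by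
        refine Finset.sum_le_sum fun u _ ↦ ?_
        rw [(measurePreserving_eval _ u).measure_preimage
          (Set.toFinite _).measurableSet.nullMeasurableSet]
        exact measure_abs_empMean_sub_ge_le (hp u) l hΔ
    _ = Fintype.card ι * ENNReal.ofReal (2 * Real.exp (-2 * l * Δ ^ 2)) := by
        rw [Finset.sum_const, Finset.card_univ, nsmul_eq_mul]

end MeanCollision

section TrainLaw

lemma twoStateTrainLaw_preimage_snd_le (n l : ℕ) (μP : Measure ℝ)
    (A : Set (Fin n → Fin l → Bool)) :
    twoStateTrainLaw n l μP (Prod.snd ⁻¹' A) ≤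
      ∫⁻ p, Measure.pi (fun u ↦ Measure.pi fun _ : Fin l ↦ bern (p u)) A
        ∂Measure.pi fun _ : Fin n ↦ μP := by
  have hA : MeasurableSet A := A.toFinite.measurableSet
  refine (Measure.bind_apply_le _ (measurable_snd hA)).trans_eq (lintegral_congr fun p ↦ ?_)
  rw [← Set.univ_prod, Measure.prod_prod, measure_univ, one_mul]

lemma lintegral_le_measure_add_of_forall_notMem_le {Ω : Type*} [MeasurableSpace Ω] {μ : Measure Ω}
    [IsProbabilityMeasure μ] {F : Ω → ℝ≥0∞} {C : Set Ω} {K : ℝ≥0∞} (hC : MeasurableSet C)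
    (hF : ∀ᵐ x ∂μ, F x ≤ 1) (hFC : ∀ᵐ x ∂μ, x ∉ C → F x ≤ K) :
    ∫⁻ x, F x ∂μ ≤ μ C + K :=
  calc ∫⁻ x, F x ∂μ
      ≤ ∫⁻ x, (C.indicator 1 x + K) ∂μ := by
        refine lintegral_mono_ae ?_
        filter_upwards [hF, hFC] with x hx hxC
        by_cases hmem : x ∈ C
        · simpa only [Set.indicator_of_mem hmem, Pi.one_apply] using hx.trans le_self_add
        · simpa only [Set.indicator_of_notMem hmem, zero_add] using hxC hmem
    _ = μ C + K := by
        rw [lintegral_add_right _ measurable_const, lintegral_indicator_one hC, lintegral_const,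
          measure_univ, mul_one]

lemma twoStateTrainLaw_meanCollision_le {n : ℕ} (l : ℕ) {μP : Measure ℝ} [IsProbabilityMeasure μP]
    (hμP : ∀ᵐ x ∂μP, x ∈ Set.Icc (0 : ℝ) 1) (v : Fin n) {Δ : ℝ} (hΔ : 0 ≤ Δ) {B : ℝ≥0∞}
    (hB : ∀ y, μP (Metric.closedBall y (4 * Δ)) ≤ B) :
    twoStateTrainLaw n l μP (Prod.snd ⁻¹' meanCollision l v (2 * Δ)) ≤
      n * B + n * ENNReal.ofReal (2 * Real.exp (-2 * l * Δ ^ 2)) := by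
  set π := Measure.pi fun _ : Fin n ↦ μP
  set C : Set (Fin n → ℝ) := {p | ∃ u, u ≠ v ∧ dist (p u) (p v) ≤ 4 * Δ}
  have hC : MeasurableSet C := by
    simp only [C, measurableSet_setOfPred]
    fun_prop
  have hπC : π C ≤ n * B := by
    simpa only [Fintype.card_fin] using measure_pi_exists_dist_le v hB
  have hparam : ∀ᵐ p ∂π, ∀ u, p u ∈ Set.Icc (0 : ℝ) 1 :=
    ae_all_iff.2 fun u ↦ (Measure.quasiMeasurePreserving_eval _ u).ae hμP
  refine (twoStateTrainLaw_preimage_snd_le n l μP _).trans <|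
    (lintegral_le_measure_add_of_forall_notMem_le hC ?_ ?_).trans (add_le_add_left hπC _)
  · filter_upwards [hparam] with p hp
    have (u : Fin n) := isProbabilityMeasure_bern (hp u)
    exact prob_le_one
  · filter_upwards [hparam] with p hp hpC
    have hsep (u : Fin n) (huv : u ≠ v) : 4 * Δ < |p u - p v| :=
      lt_of_not_ge fun hle ↦ hpC ⟨u, huv, hle⟩
    simpa only [Fintype.card_fin] using measure_meanCollision_le_of_separated hp hΔ hsep

end TrainLaw

section Asymptotics

lemma tendsto_natCast_mul_rpow_neg {b : ℝ} (hb : 1 < b) :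
    Tendsto (fun n : ℕ ↦ (n : ℝ) * (n : ℝ) ^ (-b)) atTop (nhds 0) := by
  refine ((tendsto_rpow_neg_atTop (sub_pos.2 hb)).comp tendsto_natCast_atTop_atTop).congr' ?_
  filter_upwards [eventually_gt_atTop 0] with n hn
  rw [Function.comp_apply, neg_sub, Real.rpow_sub (Nat.cast_pos.2 hn), Real.rpow_one,
    Real.rpow_neg n.cast_nonneg, div_eq_mul_inv]

lemma tendsto_mul_exp_neg_mul_rpow {c s : ℝ} (hc : 0 < c) (hs : 0 < s) :
    Tendsto (fun x : ℝ ↦ x * Real.exp (-c * x ^ s)) atTop (nhds 0) := by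
  refine ((tendsto_rpow_mul_exp_neg_mul_atTop_nhds_zero s⁻¹ c hc).comp
    (tendsto_rpow_atTop hs)).congr' ?_
  filter_upwards [eventually_ge_atTop 0] with x hx
  rw [Function.comp_apply, Real.rpow_rpow_inv hx hs.ne']

lemma tendsto_natCast_mul_exp_neg_mul_sq {l : ℕ → ℕ} {a b c : ℝ} (hc : 0 < c) (hab : 2 * b < a)
    (hl : ∀ n : ℕ, c * (n : ℝ) ^ a ≤ l n) :
    Tendsto (fun n : ℕ ↦ (n : ℝ) * Real.exp (-2 * l n * ((n : ℝ) ^ (-b)) ^ 2))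
      atTop (nhds 0) := by
  refine tendsto_of_tendsto_of_tendsto_of_le_of_le' tendsto_const_nhds
    ((tendsto_mul_exp_neg_mul_rpow (c := 2 * c) (by positivity) (sub_pos.2 hab)).comp
      tendsto_natCast_atTop_atTop) (Eventually.of_forall fun n ↦ by positivity) ?_
  filter_upwards [eventually_gt_atTop 0] with n hn
  have hexponent : c * (n : ℝ) ^ (a - 2 * b) ≤ l n * ((n : ℝ) ^ (-b)) ^ 2 :=
    calc c * (n : ℝ) ^ (a - 2 * b)
        = c * (n : ℝ) ^ a * ((n : ℝ) ^ (-b)) ^ 2 := by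
          rw [← Real.rpow_mul_natCast n.cast_nonneg, mul_assoc,
            ← Real.rpow_add (Nat.cast_pos.2 hn)]
          congr 2
          push_cast
          ring
      _ ≤ l n * ((n : ℝ) ^ (-b)) ^ 2 := by gcongr; exact hl n
  rw [Function.comp_apply]
  refine mul_le_mul_of_nonneg_left (Real.exp_le_exp.2 ?_) n.cast_nonneg
  linarith

lemma tendsto_natCast_mul_ofReal_const_mul {a : ℕ → ℝ} (c : ℝ)
    (ha : Tendsto (fun n : ℕ ↦ n * a n) atTop (nhds 0)) :
    Tendsto (fun n : ℕ ↦ (n : ℝ≥0∞) * ENNReal.ofReal (c * a n)) atTop (nhds 0) := by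
  have hlim : Tendsto (fun n : ℕ ↦ ENNReal.ofReal (c * (n * a n))) atTop (nhds 0) := by
    simpa only [mul_zero, ENNReal.ofReal_zero] using ENNReal.tendsto_ofReal (ha.const_mul c)
  refine hlim.congr fun n ↦ ?_
  rw [mul_left_comm, ENNReal.ofReal_mul n.cast_nonneg, ENNReal.ofReal_natCast]

end Asymptotics

section Densities

lemma measure_closedBall_le_of_le_smul_volume {ν : Measure ℝ} {K : ℝ≥0} (hν : ν ≤ K • volume)
    (y r : ℝ) : ν (Metric.closedBall y r) ≤ ENNReal.ofReal (2 * K * r) :=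
  calc ν (Metric.closedBall y r)
      ≤ K * volume (Metric.closedBall y r) := hν _
    _ = ENNReal.ofReal (2 * K * r) := by
        rw [Real.volume_closedBall, ← ENNReal.ofReal_coe_nnreal, ← ENNReal.ofReal_mul K.coe_nonneg,
          mul_left_comm, mul_assoc]

variable {X : Type*} [MeasurableSpace X] {μ : Measure X} {f : X → ℝ} {s : Set X}

lemma withDensity_ofReal_le_smul {C : ℝ} (hf0 : ∀ x ∉ s, f x = 0) (hf : ∀ x ∈ s, f x ≤ C) :
    μ.withDensity (fun x ↦ ENNReal.ofReal (f x)) ≤ C.toNNReal • μ := by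
  have hbound (x : X) : ENNReal.ofReal (f x) ≤ ENNReal.ofReal C := by
    by_cases hx : x ∈ s
    · exact ENNReal.ofReal_le_ofReal (hf x hx)
    · simp only [hf0 x hx, ENNReal.ofReal_zero, zero_le]
  exact (withDensity_mono (ae_of_all μ hbound)).trans_eq (withDensity_const _)

lemma ae_mem_withDensity_ofReal (hs : MeasurableSet s) (hf0 : ∀ x ∉ s, f x = 0) :
    ∀ᵐ x ∂μ.withDensity (fun x ↦ ENNReal.ofReal (f x)), x ∈ s := by
  have hindicator : s.indicator (fun x ↦ ENNReal.ofReal (f x)) = fun x ↦ ENNReal.ofReal (f x) :=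
    Set.indicator_eq_self.2 <| Function.support_subset_iff'.2 fun x hx ↦ by
      rw [hf0 x hx, ENNReal.ofReal_zero]
  rw [← hindicator, withDensity_indicator hs]
  exact (withDensity_absolutelyContinuous _ _).ae_le (ae_restrict_mem hs)

end Densities

theorem training_means_separation_general {μP : Measure ℝ} [IsProbabilityMeasure μP] {K : ℝ≥0}
    (hdensity : μP ≤ K • volume) (hsupp : ∀ᵐ x ∂μP, x ∈ Set.Icc (0 : ℝ) 1)
    {l : ℕ → ℕ} {Δ : ℕ → ℝ} (hΔ : ∀ n, 0 ≤ Δ n)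
    (hparam : Tendsto (fun n : ℕ ↦ n * Δ n) atTop (nhds 0))
    (htrace : Tendsto (fun n : ℕ ↦ n * Real.exp (-2 * l n * Δ n ^ 2)) atTop (nhds 0))
    {Ω : ℕ → Type*} [∀ n, MeasurableSpace (Ω n)] {μ : ∀ n, Measure (Ω n)}
    {P : ∀ n, Ω n → Fin n → ℝ} {W : ∀ n, Ω n → Fin n → Fin (l n) → Bool}
    (hP : ∀ n, Measurable (P n)) (hW : ∀ n, Measurable (W n))
    (hlaw : ∀ n, (μ n).map (fun ω ↦ (P n ω, W n ω)) = twoStateTrainLaw n (l n) μP) :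
    Tendsto (fun n ↦ μ n {ω | ∃ (hn : 0 < n) (u : Fin n), u ≠ ⟨0, hn⟩ ∧
        |empMean (W n ω u) - empMean (W n ω ⟨0, hn⟩)| ≤ 2 * Δ n}) atTop (nhds 0) := by
  have hbound : Tendsto (fun n : ℕ ↦ (n : ℝ≥0∞) * ENNReal.ofReal (2 * K * 4 * Δ n) +
      n * ENNReal.ofReal (2 * Real.exp (-2 * l n * Δ n ^ 2))) atTop (nhds 0) := by
    simpa only [add_zero] using (tendsto_natCast_mul_ofReal_const_mul _ hparam).add
      (tendsto_natCast_mul_ofReal_const_mul _ htrace)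
  refine tendsto_of_tendsto_of_tendsto_of_le_of_le' tendsto_const_nhds hbound
    (Eventually.of_forall fun _ ↦ zero_le) ?_
  filter_upwards [eventually_gt_atTop 0] with n hn
  have hmeas : MeasurableSet (meanCollision (l n) (⟨0, hn⟩ : Fin n) (2 * Δ n)) :=
    (Set.toFinite _).measurableSet
  have hball (y : ℝ) :
      μP (Metric.closedBall y (4 * Δ n)) ≤ ENNReal.ofReal (2 * K * 4 * Δ n) := by
    simpa only [mul_assoc] using measure_closedBall_le_of_le_smul_volume hdensity y (4 * Δ n)
  calc μ n {ω | ∃ (hn : 0 < n) (u : Fin n), u ≠ ⟨0, hn⟩ ∧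
          |empMean (W n ω u) - empMean (W n ω ⟨0, hn⟩)| ≤ 2 * Δ n}
      ≤ μ n ((fun ω ↦ (P n ω, W n ω)) ⁻¹'
          (Prod.snd ⁻¹' meanCollision (l n) ⟨0, hn⟩ (2 * Δ n))) :=
        measure_mono fun _ ⟨_, hω⟩ ↦ hω
    _ = twoStateTrainLaw n (l n) μP (Prod.snd ⁻¹' meanCollision (l n) ⟨0, hn⟩ (2 * Δ n)) := by
        rw [← hlaw n, Measure.map_apply ((hP n).prodMk (hW n)) (measurable_snd hmeas)]
    _ ≤ _ := twoStateTrainLaw_meanCollision_le (l n) hsupp ⟨0, hn⟩ (hΔ n) hball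

/-- **Separation of the training empirical means in the two-state i.i.d. model.**
With `l n = ⌈c' n^{2+α}⌉` and `Δ_n = n^{-(1+α/4)}`, the training-trace empirical means
satisfy `P(⋃_{u=2}^n {|W̄_u − W̄_1| ≤ 2 Δ_n}) → 0` as `n → ∞`. -/
theorem training_means_separation
    (f : ℝ → ℝ) (δ₁ δ₂ : ℝ) (hδ₁ : 0 < δ₁)
    (μP : Measure ℝ) [IsProbabilityMeasure μP]
    (hμP : μP = volume.withDensity fun x => ENNReal.ofReal (f x))
    (hf0 : ∀ x ∉ Set.Ioo (0 : ℝ) 1, f x = 0)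
    (hf : ∀ x ∈ Set.Ioo (0 : ℝ) 1, δ₁ < f x ∧ f x < δ₂)
    (l : ℕ → ℕ) (c' α : ℝ) (hc' : 0 < c') (hα : 0 < α)
    (hl : ∀ n : ℕ, l n = ⌈c' * (n : ℝ) ^ ((2 : ℝ) + α)⌉₊)
    (Ω : ℕ → Type) (mΩ : ∀ n, MeasurableSpace (Ω n))
    (μ : ∀ n, Measure (Ω n)) (hμ : ∀ n, IsProbabilityMeasure (μ n))
    (P : ∀ n, Ω n → Fin n → ℝ)
    (W : ∀ n, Ω n → Fin n → Fin (l n) → Bool)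
    (hP : ∀ n, Measurable (P n)) (hW : ∀ n, Measurable (W n))
    (hlaw : ∀ n, Measure.map (fun ω => (P n ω, W n ω)) (μ n) =
      twoStateTrainLaw n (l n) μP) :
    Tendsto (fun n =>
        (μ n {ω | ∃ (hn : 0 < n) (u : Fin n), u ≠ ⟨0, hn⟩ ∧
            |empMean (W n ω u) - empMean (W n ω ⟨0, hn⟩)| ≤
              2 * (n : ℝ) ^ (-(1 + α / 4))}).toReal)
      atTop (nhds 0) := by
  subst hμP
  exact (ENNReal.tendsto_toReal ENNReal.zero_ne_top).comp <| training_means_separation_general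
    (withDensity_ofReal_le_smul hf0 fun x hx ↦ (hf x hx).2.le)
    ((ae_mem_withDensity_ofReal measurableSet_Ioo hf0).mono fun _ hx ↦ Set.Ioo_subset_Icc_self hx)
    (fun n ↦ by positivity) (tendsto_natCast_mul_rpow_neg (by linarith))
    (tendsto_natCast_mul_exp_neg_mul_sq hc' (by linarith) fun n ↦ hl n ▸ Nat.le_ceil _) hP hW hlaw
end
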